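/- The map D → ∏_{n ≥ 0} S_n sending g to the sequence of its restrictions (g|X̂_n)_{n ≥ 0} is a group isomorphism; in particular the discriminant group D is isomorphic to the product ∏_{n ≥ 0} S_n. -/

import Mathlib

/-- `f` is a portrait map over the family of permutation groups `(A n)`:
there is a family assigning to every `n` and every length-`n` word `v` an
element `a_v ∈ A n` (the group of level `n+1`) such that the `n`-th coordinate
of `f x` is `a_{(x_0, …, x_{n-1})} (x n)`.  (Indices are shifted by one with
respect to the paper: the factor of index `n` is level `n+1` of the tree.) -/
def IsPortrait (X : ℕ → Type) (A : ∀ n, Subgroup (Equiv.Perm (X n)))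
    (f : Equiv.Perm (∀ n, X n)) : Prop :=
  ∃ a : ∀ n : ℕ, ((i : Fin n) → X i.1) → A n,
    ∀ (x : ∀ n, X n) (n : ℕ),
      f x n = (a n (fun i => x i.1) : Equiv.Perm (X n)) (x n)

/-- The level-`n` cylinder `U_n` around the point `x̂`. -/
def cylU (X : ℕ → Type) (x : ∀ n, X n) (n : ℕ) : Set (∀ n, X n) :=
  {w | ∀ i, i < n → w i = x i}

/-- The discriminant group `D`: portrait maps fixing the point `x̂`. -/
def discD (X : ℕ → Type) (A : ∀ n, Subgroup (Equiv.Perm (X n))) (x : ∀ n, X n) :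
    Set (Equiv.Perm (∀ n, X n)) :=
  {g | IsPortrait X A g ∧ g x = x}

/-- The stabilizer subgroup `K_n`: portrait maps fixing the cylinder `U_n`
pointwise. -/
def stabK (X : ℕ → Type) (A : ∀ n, Subgroup (Equiv.Perm (X n))) (x : ∀ n, X n) (n : ℕ) :
    Set (Equiv.Perm (∀ n, X n)) :=
  {g | IsPortrait X A g ∧ ∀ w ∈ cylU X x n, g w = w}

/-- The setwise stabilizer `Û_n`: portrait maps preserving the cylinder `U_n`
setwise. -/
def setstabU (X : ℕ → Type) (A : ∀ n, Subgroup (Equiv.Perm (X n))) (x : ∀ n, X n) (n : ℕ) :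
    Set (Equiv.Perm (∀ n, X n)) :=
  {g | IsPortrait X A g ∧ g '' cylU X x n = cylU X x n}

/-- The centralizer subgroup `Z_n`: portrait maps fixing `x̂` and commuting with
every element of `Û_n`. -/
def centZ (X : ℕ → Type) (A : ∀ n, Subgroup (Equiv.Perm (X n))) (x : ∀ n, X n) (n : ℕ) :
    Set (Equiv.Perm (∀ n, X n)) :=
  {h | IsPortrait X A h ∧ h x = x ∧ ∀ g ∈ setstabU X A x n, h * g = g * h}

/-- The difference `X̂_n = U_n \ U_{n+1}` of consecutive cylinders around `x̂`. -/
def ringX (X : ℕ → Type) (x : ∀ n, X n) (n : ℕ) : Set (∀ n, X n) :=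
  cylU X x n \ cylU X x (n + 1)

/-- The group `S_n`: permutations of `X̂_n = U_n \ U_{n+1}` obtained as the
restrictions to `X̂_n` of the elements of the discriminant group `D`. -/
def resS (X : ℕ → Type) (A : ∀ n, Subgroup (Equiv.Perm (X n))) (x : ∀ n, X n) (n : ℕ) :
    Set (Equiv.Perm ↥(ringX X x n)) :=
  {e | ∃ g ∈ discD X A x, ∀ w : ↥(ringX X x n), (e w).1 = g w.1}

/-! A portrait map changes the `n`-th coordinate of a point through an element of `A n` that depends
only on the earlier coordinates, so being a portrait map can be tested one cylinder and one
coordinate at a time. An element of `D` preserves all cylinders around `x̂`, hence the sets `X̂_n`;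
these partition the complement of the fixed point `x̂`, which makes restriction injective.
Conversely, let `f` fix `x̂` and agree on each `X̂_k` with some `g_k ∈ D`. On the cylinder of length
`n` around a point of `X̂_k`, the `n`-th coordinate of `f` is that of `g_k` when `k < n`; on the
cylinder `U_n` around `x̂`, it is that of `g_n`, because both maps preserve `U_{n+1}`. So `f` is a
portrait map, and restriction is surjective. -/

section

open Equiv PiNat Function

theorem exists_perm_extending_of_pairwise_disjoint {ι α : Type*} {s : ι → Set α}
    (hs : Pairwise (Disjoint on s)) (e : ∀ i, Perm (s i)) :
    ∃ f : Perm α, (∀ i (a : s i), f a = e i a) ∧ ∀ a ∉ ⋃ i, s i, f a = a := by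
  classical
  let u : (Σ i, s i) ≃ ⋃ i, s i := (Set.unionEqSigmaOfDisjoint hs).symm
  exact ⟨(Perm.sigmaCongrRight e).extendDomain u,
    fun i a => Perm.extendDomain_apply_image _ u ⟨i, a⟩,
    fun _ ha => Perm.extendDomain_apply_not_subtype _ u ha⟩

variable {X : ℕ → Type} {A : ∀ n, Subgroup (Perm (X n))} {x : ∀ n, X n}

theorem isPortrait_iff_forall_cylinder {f : Perm (∀ n, X n)} :
    IsPortrait X A f ↔ ∀ w n, ∃ a ∈ A n, ∀ w' ∈ cylinder w n, f w' n = a (w' n) := by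
  constructor
  · rintro ⟨a, ha⟩ w n
    refine ⟨a n fun i => w i, (a n _).2, fun w' hw' => ?_⟩
    rw [ha, funext fun i : Fin n => hw' i i.2]
  · intro h
    have exists_label (n : ℕ) (v : (i : Fin n) → X i) :
        ∃ a : A n, ∀ w : ∀ n, X n, (fun i : Fin n => w i) = v → f w n = (a : Perm (X n)) (w n) := by
      by_cases hv : ∃ w : ∀ n, X n, (fun i : Fin n => w i) = v
      · obtain ⟨w, rfl⟩ := hv
        obtain ⟨a, ha, hfa⟩ := h w n
        exact ⟨⟨a, ha⟩, fun w' hw' => hfa w' fun i hi => congrFun hw' ⟨i, hi⟩⟩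
      · exact ⟨1, fun w hw => absurd ⟨w, hw⟩ hv⟩
    choose a ha using exists_label
    exact ⟨a, fun w n => ha n _ w rfl⟩

namespace IsPortrait

variable {f g : Perm (∀ n, X n)}

theorem of_locally
    (h : ∀ w n, ∃ g, IsPortrait X A g ∧ ∀ w' ∈ cylinder w n, f w' n = g w' n) :
    IsPortrait X A f := by
  refine isPortrait_iff_forall_cylinder.2 fun w n => ?_
  obtain ⟨g, hg, hfg⟩ := h w n
  obtain ⟨a, ha, hga⟩ := isPortrait_iff_forall_cylinder.1 hg w n
  exact ⟨a, ha, fun w' hw' => (hfg w' hw').trans (hga w' hw')⟩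

theorem apply_mem_cylinder_iff (hf : IsPortrait X A f) {w w' : ∀ n, X n} {n : ℕ} :
    f w' ∈ cylinder (f w) n ↔ w' ∈ cylinder w n := by
  induction n with
  | zero => simp only [cylinder_zero, Set.mem_univ]
  | succ n ih =>
    simp only [mem_cylinder_iff, Nat.forall_lt_succ_right] at ih ⊢
    rw [ih]
    refine and_congr_right fun hw' => ?_
    obtain ⟨a, -, ha⟩ := isPortrait_iff_forall_cylinder.1 hf w n
    rw [ha w' hw', ha w (self_mem_cylinder w n), a.injective.eq_iff]

theorem one : IsPortrait X A 1 :=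
  isPortrait_iff_forall_cylinder.2 fun _ n => ⟨1, one_mem (A n), fun _ _ => rfl⟩

theorem mul (hf : IsPortrait X A f) (hg : IsPortrait X A g) : IsPortrait X A (f * g) := by
  refine isPortrait_iff_forall_cylinder.2 fun w n => ?_
  obtain ⟨b, hb, hgb⟩ := isPortrait_iff_forall_cylinder.1 hg w n
  obtain ⟨a, ha, hfa⟩ := isPortrait_iff_forall_cylinder.1 hf (g w) n
  refine ⟨a * b, mul_mem ha hb, fun w' hw' => ?_⟩
  rw [Perm.mul_apply, hfa _ (hg.apply_mem_cylinder_iff.2 hw'), hgb w' hw', Perm.mul_apply]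

theorem inv (hf : IsPortrait X A f) : IsPortrait X A f⁻¹ := by
  refine isPortrait_iff_forall_cylinder.2 fun w n => ?_
  obtain ⟨a, ha, hfa⟩ := isPortrait_iff_forall_cylinder.1 hf (f.symm w) n
  refine ⟨a⁻¹, inv_mem ha, fun w' hw' => Perm.eq_inv_iff_eq.2 ?_⟩
  have h_symm : f.symm w' ∈ cylinder (f.symm w) n :=
    hf.apply_mem_cylinder_iff.1 (by simpa only [apply_symm_apply] using hw')
  exact (hfa _ h_symm).symm.trans (congrFun (f.apply_symm_apply w') n)

end IsPortrait

section ringX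

variable {w : ∀ n, X n} {n : ℕ}

theorem mem_ringX_iff : w ∈ ringX X x n ↔ w ≠ x ∧ firstDiff w x = n := by
  -- `cylU X x n` is definitionally `PiNat.cylinder x n`.
  change w ∈ cylinder x n \ cylinder x (n + 1) ↔ _
  by_cases hw : w = x
  · simp only [hw, Set.mem_sdiff, self_mem_cylinder, not_true, and_false, ne_eq, false_and]
  · simp only [Set.mem_sdiff, mem_cylinder_iff_le_firstDiff hw, ne_eq, hw, not_false_iff, true_and]
    omega

theorem mem_iUnion_ringX_iff : w ∈ ⋃ k, ringX X x k ↔ w ≠ x := by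
  simp only [Set.mem_iUnion, mem_ringX_iff, exists_and_left, exists_eq', and_true]

theorem pairwise_disjoint_ringX (x : ∀ n, X n) : Pairwise (Disjoint on ringX X x) :=
  fun _ _ hkl => Set.disjoint_left.2 fun _ hk hl =>
    hkl ((mem_ringX_iff.1 hk).2.symm.trans (mem_ringX_iff.1 hl).2)

theorem mem_ringX_congr {w' : ∀ n, X n} (h : w' ∈ cylinder w (n + 1)) :
    w' ∈ ringX X x n ↔ w ∈ ringX X x n := by
  have mem_congr (m : ℕ) (hm : m ≤ n + 1) : w' ∈ cylinder x m ↔ w ∈ cylinder x m := by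
    rw [mem_cylinder_iff_eq, mem_cylinder_iff_eq.1 (cylinder_anti w hm h), ← mem_cylinder_iff_eq]
  exact and_congr (mem_congr n n.le_succ) (mem_congr (n + 1) le_rfl).not

theorem eq_of_eqOn_ringX {β : Type*} {f g : (∀ n, X n) → β} (hx : f x = g x)
    (h : ∀ k, Set.EqOn f g (ringX X x k)) : f = g := by
  ext1 w
  by_cases hw : w = x
  · rw [hw, hx]
  · exact h (firstDiff w x) (mem_ringX_iff.2 ⟨hw, rfl⟩)

theorem apply_mem_cylinder_of_forall_ringX {f : (∀ n, X n) → ∀ n, X n} (hfx : f x = x)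
    (hf : ∀ k, ∀ w ∈ ringX X x k, f w ∈ ringX X x k) (hw : w ∈ cylinder x n) :
    f w ∈ cylinder x n := by
  by_cases hwx : w = x
  · rw [hwx, hfx]
    exact self_mem_cylinder x n
  · have hn : n ≤ firstDiff w x := (mem_cylinder_iff_le_firstDiff hwx n).1 hw
    exact cylinder_anti x hn (hf _ w (mem_ringX_iff.2 ⟨hwx, rfl⟩)).1

end ringX

/-- The discriminant group `D` as a subgroup of the permutations of `X̂`. Its carrier is `discD`
itself, so that its elements are definitionally those of `discD`. -/
def discriminant (A : ∀ n, Subgroup (Perm (X n))) (x : ∀ n, X n) :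
    Subgroup (Perm (∀ n, X n)) where
  carrier := discD X A x
  one_mem' := ⟨.one, rfl⟩
  mul_mem' hf hg := ⟨hf.1.mul hg.1, by rw [Perm.mul_apply, hg.2, hf.2]⟩
  inv_mem' hf := ⟨hf.1.inv, Perm.inv_eq_iff_eq.2 hf.2.symm⟩

section discriminant

variable {g : Perm (∀ n, X n)} {w : ∀ n, X n} {n : ℕ}

theorem apply_mem_cylinder_iff_of_mem_discriminant (hg : g ∈ discriminant A x) :
    g w ∈ cylinder x n ↔ w ∈ cylinder x n := by
  simpa only [hg.2] using hg.1.apply_mem_cylinder_iff (w := x) (w' := w) (n := n)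

theorem apply_mem_ringX_iff_of_mem_discriminant (hg : g ∈ discriminant A x) :
    g w ∈ ringX X x n ↔ w ∈ ringX X x n :=
  and_congr (apply_mem_cylinder_iff_of_mem_discriminant hg)
    (apply_mem_cylinder_iff_of_mem_discriminant hg).not

theorem mem_discriminant_of_eqOn_ringX {f : Perm (∀ n, X n)} {g : ℕ → Perm (∀ n, X n)}
    (hg : ∀ k, g k ∈ discriminant A x) (hfx : f x = x)
    (hfg : ∀ k, Set.EqOn f (g k) (ringX X x k)) : f ∈ discriminant A x := by
  have hf_ring (k : ℕ) (w) (hw : w ∈ ringX X x k) : f w ∈ ringX X x k := by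
    rw [hfg k hw]
    exact (apply_mem_ringX_iff_of_mem_discriminant (hg k)).2 hw
  have hf_coord (n : ℕ) (w) (hw : w ∈ cylinder x n) : f w n = g n w n := by
    by_cases hw' : w ∈ cylinder x (n + 1)
    · have hgw := (apply_mem_cylinder_iff_of_mem_discriminant (hg n)).2 hw'
      have hfw := apply_mem_cylinder_of_forall_ringX hfx hf_ring hw'
      exact (hfw n n.lt_succ_self).trans (hgw n n.lt_succ_self).symm
    · rw [hfg n ⟨hw, hw'⟩]
  refine ⟨IsPortrait.of_locally fun w n => ?_, hfx⟩
  by_cases hw : w ∈ cylinder x n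
  · refine ⟨g n, (hg n).1, fun w' hw' => hf_coord n w' ?_⟩
    rwa [← mem_cylinder_iff_eq.1 hw]
  · have hwx : w ≠ x := fun h => hw (h ▸ self_mem_cylinder w n)
    obtain ⟨k, hk⟩ := Set.mem_iUnion.1 (mem_iUnion_ringX_iff.2 hwx)
    have hkn : k + 1 ≤ n := by
      rw [mem_cylinder_iff_le_firstDiff hwx, (mem_ringX_iff.1 hk).2] at hw
      omega
    refine ⟨g k, (hg k).1, fun w' hw' => ?_⟩
    rw [hfg k ((mem_ringX_congr (cylinder_anti w hkn hw')).2 hk)]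

end discriminant

/-- The restriction homomorphism `ρ_n : D → Sym(X̂_n)`. -/
def restrictRingX (A : ∀ n, Subgroup (Perm (X n))) (x : ∀ n, X n) (n : ℕ) :
    discriminant A x →* Perm (ringX X x n) where
  toFun g := g.1.subtypePerm fun _ => apply_mem_ringX_iff_of_mem_discriminant g.2
  map_one' := rfl
  map_mul' _ _ := rfl

theorem resS_eq_coe_range_restrictRingX (A : ∀ n, Subgroup (Perm (X n))) (x : ∀ n, X n) (n : ℕ) :
    resS X A x n = (restrictRingX A x n).range := by
  ext e
  constructor
  · rintro ⟨g, hg, heg⟩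
    exact ⟨⟨g, hg⟩, Perm.ext fun w => Subtype.ext (heg w).symm⟩
  · rintro ⟨g, rfl⟩
    exact ⟨g, g.2, fun _ => rfl⟩

/-- The group `S_n`, the image of `ρ_n`, as a subgroup of `Sym(X̂_n)`. Its carrier is `resS` itself,
so that its elements are definitionally those of `resS`. -/
def restrictionGroup (A : ∀ n, Subgroup (Perm (X n))) (x : ∀ n, X n) (n : ℕ) :
    Subgroup (Perm (ringX X x n)) :=
  (restrictRingX A x n).range.copy (resS X A x n) (resS_eq_coe_range_restrictRingX A x n)

/-- The homomorphism `D → ∏ S_n` sending `g` to the sequence of its restrictions to the `X̂_n`. -/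
def restrictPi (A : ∀ n, Subgroup (Perm (X n))) (x : ∀ n, X n) :
    discriminant A x →* ∀ n, restrictionGroup A x n :=
  MonoidHom.pi fun n => (restrictRingX A x n).codRestrict _ fun g => ⟨g, g.2, fun _ => rfl⟩

theorem restrictPi_injective (A : ∀ n, Subgroup (Perm (X n))) (x : ∀ n, X n) :
    Injective (restrictPi A x) := by
  intro f g hfg
  refine Subtype.ext (coe_fn_injective (eq_of_eqOn_ringX (f.2.2.trans g.2.2.symm) fun k w hw => ?_))
  have hk : restrictRingX A x k f = restrictRingX A x k g := congrArg Subtype.val (congrFun hfg k)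
  exact congrArg Subtype.val (Perm.congr_fun hk ⟨w, hw⟩)

theorem restrictPi_surjective (A : ∀ n, Subgroup (Perm (X n))) (x : ∀ n, X n) :
    Surjective (restrictPi A x) := by
  intro e
  obtain ⟨f, hfe, hf⟩ :=
    exists_perm_extending_of_pairwise_disjoint (pairwise_disjoint_ringX x) fun k => (e k).1
  have hfx : f x = x := hf x fun hx => mem_iUnion_ringX_iff.1 hx rfl
  choose g hg heg using fun k => (e k).2
  have hfD : f ∈ discriminant A x :=
    mem_discriminant_of_eqOn_ringX hg hfx fun k w hw =>
      (hfe k ⟨w, hw⟩).trans (heg k ⟨w, hw⟩)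
  exact ⟨⟨f, hfD⟩, funext fun k => Subtype.ext (Perm.ext fun w => Subtype.ext (hfe k w))⟩

theorem stmt13_general (A : ∀ n, Subgroup (Perm (X n))) (x : ∀ n, X n) :
    ∃ ψ : discriminant A x ≃* ∀ k, restrictionGroup A x k,
      ∀ (g : discriminant A x) (k : ℕ) (w : ringX X x k), ((ψ g k).1 w).1 = g.1 w.1 :=
  ⟨.ofBijective (restrictPi A x) ⟨restrictPi_injective A x, restrictPi_surjective A x⟩,
    fun _ _ _ => rfl⟩

end

/-- The map sending `g ∈ D` to the sequence of its restrictions `(g|X̂_n)_{n ≥ 0}`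
is a group isomorphism of the discriminant group `D` onto the product
`∏_{n ≥ 0} S_n`: it is a bijection compatible with products. -/
theorem stmt13 (X : ℕ → Type) [∀ n, Finite (X n)]
    (hcard : ∀ n, 2 ≤ Nat.card (X n))
    (A : ∀ n, Subgroup (Equiv.Perm (X n)))
    (htrans : ∀ n, ∀ y z : X n, ∃ a ∈ A n, a y = z)
    (x : ∀ n, X n) :
    ∃ ψ : ↥(discD X A x) ≃ ((k : ℕ) → ↥(resS X A x k)),
      (∀ (g : ↥(discD X A x)) (k : ℕ) (w : ↥(ringX X x k)),
        ((ψ g k).1 w).1 = g.1 w.1) ∧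
      (∀ g h : ↥(discD X A x), ∃ hm : g.1 * h.1 ∈ discD X A x,
        ∀ k : ℕ, (ψ ⟨g.1 * h.1, hm⟩ k).1 = (ψ g k).1 * (ψ h k).1) := by
  obtain ⟨ψ, hψ⟩ := stmt13_general A x
  exact ⟨ψ.toEquiv, hψ, fun g h => ⟨(discriminant A x).mul_mem g.2 h.2, fun k =>
    congrArg Subtype.val (congrFun (ψ.map_mul g h) k)⟩⟩
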